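/- For all integers t ≥ 4 and k ≥ 2, there exists a 3-uniform hypergraph H, a 2-element vertex set S, and k edges e_1, ..., e_k of H with e_i ∩ e_j = S for all i ≠ j, such that (1) H admits a k-coloring with no monochromatic K_t^{(3)}, and (2) in every k-coloring of E(H) with no monochromatic copy of K_t^{(3)}, the edges e_1, ..., e_k all receive pairwise distinct colors (i.e., their set of colors is exactly [k]). -/

import Mathlib

/-!
Call a coloring good if it has no monochromatic `K_t^{(3)}`. A *star* consists of the edges
`{x, y, n}` through a fixed pair `x, y`, one for each leaf `n`; a set `F` of color patterns on the
leaves is *realizable* if it is exactly the set of patterns that good colorings of some finite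
hypergraph induce on a star (`Realizable`). The goal is to realize the injective patterns on `k`
leaves.

* **Gluing.** Take embeddings `φ l : N → W` whose images pairwise share at most one point. Glue one
  copy of a gadget for `F` on each image, with the pair `x, y` in common and all other vertices
  private. A clique has at least four vertices, so it contains a private vertex or two leaves, and
  either one puts it inside a single copy. Hence the patterns `χ` on `W` with `χ ∘ φ l ∈ F` for all
  `l` are realizable (`good_amalgam_iff`, `Realizable.amalgam`). One may also forget leaves
  (`Realizable.restrict`), and realizable relations are invariant under color permutations.

* **A first relation.** By Ramsey's theorem there are non-colorable hypergraphs. Delete an edge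
  `{x, y, z}` from an edge-minimal one. In a good coloring of the rest, giving `{x, y, z}` the color
  `i` must create a clique of color `i`, so `i` already occurs on an edge through `x, y`: the star at
  `x, y` sees all colors (`exists_critical`, `exists_surjective_relation`).

* **A negative sender.** Two distinct combinatorial lines in `N^ι` share at most one point
  (`isLinear_lines`), and by Hales–Jewett, for large `ι`, no coloring of `N^ι` has a pattern of `F`
  on every line, as patterns in `F` are not constant. Choose a colorable set `J` of lines and a line
  `l₀` with `J ∪ {l₀}` not colorable. The disjoint union of `J` and a free copy of `l₀` is colorable.
  Identify the points of the free copy with those of `l₀` one at a time: at the first failure, the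
  two points about to be identified get different colors in every valid coloring of the current
  system (`exists_separating_system`). Gluing, forgetting the other leaves and permuting colors
  realizes the relation that two leaves have different colors (`realizable_ne`).

* **Conclusion.** Gluing negative senders over all pairs of `k` leaves realizes the injective
  patterns (`realizable_rainbow`).
-/

/-- Coloring `c` of the edge set `E` of a 3-uniform hypergraph has no monochromatic
copy of `K_t^{(3)}`. -/
def NoMonoK3 (k t : ℕ) (E : Finset (Finset ℕ)) (c : Finset ℕ → Fin k) : Prop :=
  ¬ ∃ S : Finset ℕ, S.card = t ∧ ∃ x : Fin k, ∀ e ⊆ S, e.card = 3 → e ∈ E ∧ c e = x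

/-- The coloring `c` of the hypergraph with edge set `E` has no monochromatic `K_t^{(3)}`; this is
`NoMonoK3` over an arbitrary vertex type. -/
def Good (k t : ℕ) {V : Type} (E : Set (Finset V)) (c : Finset V → Fin k) : Prop :=
  ¬ ∃ S : Finset V, S.card = t ∧ ∃ x : Fin k, ∀ e ⊆ S, e.card = 3 → e ∈ E ∧ c e = x

lemma Good.congr {k t : ℕ} {V : Type} {E : Set (Finset V)} {c c' : Finset V → Fin k}
    (h : Good k t E c) (hc : ∀ e ∈ E, c e = c' e) : Good k t E c' := by
  rintro ⟨S, hS, x, hx⟩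
  exact h ⟨S, hS, x, fun e he h3 => ⟨(hx e he h3).1, by
    rw [hc e (hx e he h3).1]; exact (hx e he h3).2⟩⟩

lemma Good.perm {k t : ℕ} {V : Type} {E : Set (Finset V)} {c : Finset V → Fin k}
    (h : Good k t E c) (σ : Equiv.Perm (Fin k)) : Good k t E (fun e => σ (c e)) := by
  rintro ⟨S, hS, x, hx⟩
  exact h ⟨S, hS, σ.symm x, fun e he h3 => ⟨(hx e he h3).1, by
    rw [← (hx e he h3).2]; simp⟩⟩

/-- Every vertex of a clique on at least three vertices lies in an edge, so the cliques of the image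
hypergraph are the images of cliques and goodness transfers along injections of the vertex set. -/
lemma good_image_iff {k t : ℕ} (ht : 4 ≤ t) {V V' : Type} (f : V ↪ V') (E : Set (Finset V))
    (c : Finset V' → Fin k) :
    Good k t (Finset.map f '' E) c ↔ Good k t E (fun e => c (e.map f)) := by
  classical
  constructor
  · rintro h ⟨S, hS, x, hx⟩
    refine h ⟨S.map f, by simpa, x, fun e he h3 => ?_⟩
    obtain ⟨e', he', rfl⟩ := Finset.subset_map_iff.1 he
    have := hx e' he' (by simpa using h3)
    exact ⟨⟨e', this.1, rfl⟩, this.2⟩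
  · rintro h ⟨S, hS, x, hx⟩
    have hr : ∀ v ∈ S, ∃ u, f u = v := by
      intro v hv
      obtain ⟨e, h1, h2, h3⟩ := Finset.exists_subsuperset_card_eq
        (Finset.singleton_subset_iff.2 hv) (n := 3) (by simp) (by omega)
      obtain ⟨e', -, rfl⟩ := (hx e h2 h3).1
      have := h1 (Finset.mem_singleton_self v)
      simp only [Finset.mem_map] at this
      obtain ⟨u, -, hu⟩ := this
      exact ⟨u, hu⟩
    obtain ⟨S', rfl⟩ : ∃ S' : Finset V, S = S'.map f := by
      refine ⟨S.preimage f f.injective.injOn, ?_⟩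
      ext v
      simp only [Finset.mem_map, Finset.mem_preimage]
      constructor
      · intro hv
        obtain ⟨u, rfl⟩ := hr v hv
        exact ⟨u, hv, rfl⟩
      · rintro ⟨u, hu, rfl⟩
        exact hu
    refine h ⟨S', by simpa using hS, x, fun e he h3 => ?_⟩
    have := hx (e.map f) (Finset.map_subset_map.2 he) (by simpa using h3)
    obtain ⟨⟨e', he', h'⟩, h2⟩ := this
    rw [Finset.map_inj] at h'
    subst h'
    exact ⟨he', h2⟩

/-! ### Ramsey's theorem for triples and a critical hypergraph -/

/-- Ramsey's theorem for triples, via iterated limits along a nonprincipal ultrafilter on `ℕ`. -/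
lemma ramsey_infinite {k : ℕ} (C : Finset ℕ → Fin k) (t : ℕ) :
    ∃ S : Finset ℕ, S.card = t ∧ ∃ x : Fin k, ∀ e ⊆ S, e.card = 3 → C e = x := by
  let U := Filter.hyperfilter ℕ
  have lim : ∀ f : ℕ → Fin k, ∃ x, ∀ᶠ n in (U : Filter ℕ), f n = x := by
    intro f
    rw [← Ultrafilter.eventually_exists_iff]
    exact Filter.Eventually.of_forall fun n => ⟨_, rfl⟩
  choose c2 h2 using fun (a b : ℕ) => lim fun z => C {a, b, z}
  choose c1 h1 using fun a => lim fun b => c2 a b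
  obtain ⟨x, hx⟩ := lim c1
  have symm : ∀ a b, c2 a b = c2 b a := by
    intro a b
    obtain ⟨z, hz, hz'⟩ := ((h2 a b).and (h2 b a)).exists
    rw [← hz, ← hz', Finset.insert_comm]
  have key : ∃ S : Finset ℕ, S.card = t ∧ (∀ a ∈ S, c1 a = x) ∧
      (∀ a ∈ S, ∀ b ∈ S, a ≠ b → c2 a b = x) ∧
      (∀ e ⊆ S, e.card = 3 → C e = x) := by
    induction t with
    | zero =>
      refine ⟨∅, rfl, by simp, by simp, ?_⟩
      intro e he h3
      rw [Finset.subset_empty.1 he] at h3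
      simp at h3
    | succ t ih =>
      obtain ⟨S, hS, hS1, hS2, hS3⟩ := ih
      have e1 : ∀ᶠ z in (U : Filter ℕ), ∀ a ∈ S, c2 a z = x := by
        rw [Filter.eventually_all_finset]
        intro a ha
        rw [← hS1 a ha]
        exact h1 a
      have e2 : ∀ᶠ z in (U : Filter ℕ), ∀ a ∈ S, ∀ b ∈ S, a ≠ b → C {a, b, z} = x := by
        rw [Filter.eventually_all_finset]
        intro a ha
        rw [Filter.eventually_all_finset]
        intro b hb
        by_cases hab : a = b
        · simp [hab]
        · rw [← hS2 a ha b hb hab]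
          filter_upwards [h2 a b] with z hz _ using hz
      have e3 : ∀ᶠ z in (U : Filter ℕ), z ∉ S :=
        Filter.compl_mem_hyperfilter_of_finite S.finite_toSet
      obtain ⟨z, hz, hz1, hz2, hz3⟩ := (hx.and (e1.and (e2.and e3))).exists
      refine ⟨insert z S, by simp [hz3, hS], ?_, ?_, ?_⟩
      · intro a ha
        rcases Finset.mem_insert.1 ha with rfl | ha
        · exact hz
        · exact hS1 a ha
      · intro a ha b hb hab
        rcases Finset.mem_insert.1 ha with rfl | ha <;> rcases Finset.mem_insert.1 hb with rfl | hb
        · exact absurd rfl hab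
        · rw [symm]; exact hz1 b hb
        · exact hz1 a (by assumption)
        · exact hS2 a ha b hb hab
      · intro e he h3
        by_cases hze : z ∈ e
        · obtain ⟨a, b, hab, hab'⟩ := Finset.card_eq_two.1
            (show (e.erase z).card = 2 by rw [Finset.card_erase_of_mem hze, h3])
          have hsub : e.erase z ⊆ S := by
            intro v hv
            rw [Finset.mem_erase] at hv
            exact (Finset.mem_insert.1 (he hv.2)).resolve_left hv.1
          have : e = {a, b, z} := by
            rw [← Finset.insert_erase hze, hab']
            ext v; simp; tauto
          rw [this]
          exact hz2 a (hsub (by simp [hab'])) b (hsub (by simp [hab'])) hab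
        · exact hS3 e (fun v hv => (Finset.mem_insert.1 (he hv)).resolve_left
            (by rintro rfl; exact hze hv)) h3
  obtain ⟨S, hS, -, -, h⟩ := key
  exact ⟨S, hS, x, h⟩

/-- Finite Ramsey for triples, from the infinite version by compactness. -/
lemma exists_uncolorable (k t : ℕ) :
    ∃ E : Finset (Finset ℕ), (∀ g ∈ E, g.card = 3) ∧ ∀ c : Finset ℕ → Fin k,
      ¬ Good k t (E : Set (Finset ℕ)) c := by
  by_contra! hcon
  choose c hc using fun n : ℕ => hcon ((Finset.range n).powersetCard 3)
    (fun g hg => (Finset.mem_powersetCard.1 hg).2)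
  let U := Filter.hyperfilter ℕ
  have lim : ∀ f : ℕ → Fin k, ∃ x, ∀ᶠ n in (U : Filter ℕ), f n = x := by
    intro f
    rw [← Ultrafilter.eventually_exists_iff]
    exact Filter.Eventually.of_forall fun n => ⟨_, rfl⟩
  choose C hC using fun g => lim fun n => c n g
  obtain ⟨S, hS, x, hx⟩ := ramsey_infinite C t
  have e1 : ∀ᶠ n in (U : Filter ℕ), ∀ g ∈ S.powersetCard 3, c n g = C g := by
    rw [Filter.eventually_all_finset]
    exact fun g _ => hC g
  have e2 : ∀ᶠ n in (U : Filter ℕ), S.sup id < n :=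
    Nat.hyperfilter_le_atTop (Filter.eventually_gt_atTop _)
  obtain ⟨n, h1, h2⟩ := (e1.and e2).exists
  refine hc n ⟨S, hS, x, fun e he h3 => ⟨?_, ?_⟩⟩
  · rw [Finset.mem_coe, Finset.mem_powersetCard]
    refine ⟨fun v hv => ?_, h3⟩
    rw [Finset.mem_range]
    exact lt_of_le_of_lt (Finset.le_sup (f := id) (he hv)) h2
  · rw [h1 e (Finset.mem_powersetCard.2 ⟨he, h3⟩), hx e he h3]

/-- Removing an edge `{x, y, z}` from a critical (edge-minimal non-colorable) hypergraph leaves a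
colorable one in which every good coloring uses all colors on the edges through `x, y`: for each
color there must be a clique through `{x, y, z}` whose other edges all have that color. -/
lemma exists_critical (k t : ℕ) (hk : 2 ≤ k) (ht : 4 ≤ t) :
    ∃ (E : Finset (Finset ℕ)) (x y : ℕ), x ≠ y ∧ (∀ g ∈ E, g.card = 3) ∧
      (∃ c : Finset ℕ → Fin k, Good k t (E : Set (Finset ℕ)) c) ∧
      ∀ c : Finset ℕ → Fin k, Good k t (E : Set (Finset ℕ)) c →
        ∀ i, ∃ w, w ≠ x ∧ w ≠ y ∧ {x, y, w} ∈ E ∧ c {x, y, w} = i := by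
  obtain ⟨E₀, h3₀, hE₀⟩ := exists_uncolorable k t
  obtain ⟨E, hmin⟩ := exists_minimal_of_wellFoundedLT
    (fun E : Finset (Finset ℕ) => (∀ g ∈ E, g.card = 3) ∧ ∀ c : Finset ℕ → Fin k,
      ¬ Good k t (E : Set (Finset ℕ)) c) ⟨E₀, h3₀, hE₀⟩
  obtain ⟨h3, hE⟩ := hmin.prop
  have hne : E.Nonempty := by
    rw [Finset.nonempty_iff_ne_empty]
    rintro rfl
    refine hE (fun _ => ⟨0, by omega⟩) ?_
    rintro ⟨S, hS, i, hi⟩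
    obtain ⟨e, he, he3⟩ := Finset.exists_subset_card_eq (s := S) (n := 3) (by omega)
    simpa using (hi e he he3).1
  obtain ⟨e, he⟩ := hne
  obtain ⟨x, y, z, hxy, hxz, hyz, rfl⟩ := Finset.card_eq_three.1 (h3 e he)
  refine ⟨E.erase {x, y, z}, x, y, hxy, fun g hg => h3 g (Finset.mem_of_mem_erase hg), ?_, ?_⟩
  · by_contra! hcon
    have := hmin.le_of_le ⟨fun g hg => h3 g (Finset.mem_of_mem_erase hg), hcon⟩
      (Finset.erase_subset _ _)
    exact absurd (this he) (Finset.notMem_erase _ _)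
  · intro c hc i
    have := hE (Function.update c {x, y, z} i)
    rw [Good, not_not] at this
    obtain ⟨S, hS, j, hj⟩ := this
    have hsub : {x, y, z} ⊆ S := by
      by_contra hns
      refine hc ⟨S, hS, j, fun g hg hg3 => ?_⟩
      have hne : g ≠ {x, y, z} := by rintro rfl; exact hns hg
      have := hj g hg hg3
      rw [Function.update_of_ne hne] at this
      exact ⟨by simpa [hne] using this.1, this.2⟩
    obtain rfl : i = j := by
      simpa using (hj _ hsub (h3 _ he)).2
    obtain ⟨w, hwS, hw⟩ : ∃ w ∈ S, w ∉ ({x, y, z} : Finset ℕ) := by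
      apply Finset.exists_mem_notMem_of_card_lt_card
      rw [h3 _ he]; omega
    simp only [Finset.mem_insert, Finset.mem_singleton, not_or] at hw
    have hne : ({x, y, w} : Finset ℕ) ≠ {x, y, z} := by
      intro h
      have : w ∈ ({x, y, z} : Finset ℕ) := by rw [← h]; simp
      simp at this
      tauto
    have hx : x ∈ S := hsub (by simp)
    have hy : y ∈ S := hsub (by simp)
    have := hj {x, y, w} (by intro v; simp; rintro (rfl | rfl | rfl) <;> assumption)
      (Finset.card_eq_three.2 ⟨x, y, w, hxy, Ne.symm hw.1, Ne.symm hw.2.1, rfl⟩)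
    rw [Function.update_of_ne hne] at this
    refine ⟨w, hw.1, hw.2.1, ?_, this.2⟩
    exact Finset.mem_erase.2 ⟨hne, this.1⟩

/-! ### Realizable star relations -/

open scoped Classical in
/-- The edge `{x, y, n}` of the star with centre pair `x = inl false`, `y = inl true` and leaf `n`,
on a vertex set `Bool ⊕ N ⊕ M` consisting of the centre pair, the leaves and the other vertices. -/
noncomputable def starEdge {N : Type} (M : Type) (n : N) : Finset (Bool ⊕ N ⊕ M) :=
  {Sum.inl false, Sum.inl true, Sum.inr (Sum.inl n)}

lemma mem_starEdge {N M : Type} {n : N} {v : Bool ⊕ N ⊕ M} :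
    v ∈ starEdge M n ↔ v = Sum.inl false ∨ v = Sum.inl true ∨ v = Sum.inr (Sum.inl n) := by
  simp [starEdge]

lemma card_starEdge {N M : Type} (n : N) : (starEdge M n).card = 3 := by
  classical
  rw [Finset.card_eq_three]
  exact ⟨_, _, _, by simp, by simp, by simp, rfl⟩

lemma starEdge_injective {N M : Type} : Function.Injective (starEdge M : N → _) := by
  intro n m h
  have : Sum.inr (Sum.inl n) ∈ starEdge M m := by rw [← h, mem_starEdge]; simp
  simpa [mem_starEdge] using this

/-- A set `F` of `N`-tuples of colors is realizable if it is exactly the set of color patterns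
induced by the good colorings of some finite 3-uniform hypergraph on a star with leaf set `N`. -/
def Realizable (k t : ℕ) (N : Type) (F : Set (N → Fin k)) : Prop :=
  ∃ E : Set (Finset (Bool ⊕ N ⊕ ℕ)), E.Finite ∧ (∀ g ∈ E, g.card = 3) ∧
    (∀ n, starEdge ℕ n ∈ E) ∧ F = {χ | ∃ c, Good k t E c ∧ ∀ n, c (starEdge ℕ n) = χ n}

lemma Realizable.perm {k t : ℕ} {N : Type} {F : Set (N → Fin k)} (h : Realizable k t N F)
    (σ : Equiv.Perm (Fin k)) {χ : N → Fin k} (hχ : χ ∈ F) : (fun n => σ (χ n)) ∈ F := by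
  obtain ⟨E, -, -, -, rfl⟩ := h
  obtain ⟨c, hc, hχ⟩ := hχ
  exact ⟨_, hc.perm σ, fun n => by rw [hχ]⟩

/-- Any star in a hypergraph on a countable vertex set yields a realizable relation. -/
lemma realizable_of_star {k t : ℕ} (ht : 4 ≤ t) {V N : Type} [Countable V]
    (E : Set (Finset V)) (hfin : E.Finite) (h3 : ∀ g ∈ E, g.card = 3)
    {x y : V} (hxy : x ≠ y) (ι : N → V) (hι : Function.Injective ι)
    (hx : ∀ n, ι n ≠ x) (hy : ∀ n, ι n ≠ y)
    (s : N → Finset V) (hs : ∀ n v, v ∈ s n ↔ v = x ∨ v = y ∨ v = ι n) (hsE : ∀ n, s n ∈ E) :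
    Realizable k t N {χ | ∃ c, Good k t E c ∧ ∀ n, c (s n) = χ n} := by
  classical
  obtain ⟨q, hq⟩ := exists_injective_nat V
  let r : V → Bool ⊕ N ⊕ ℕ := fun v =>
    if v = x then Sum.inl false else if v = y then Sum.inl true else
      if h : ∃ n, ι n = v then Sum.inr (Sum.inl h.choose) else Sum.inr (Sum.inr (q v))
  have rx : r x = Sum.inl false := by simp [r]
  have ry : r y = Sum.inl true := by simp [r, hxy.symm]
  have rι : ∀ n, r (ι n) = Sum.inr (Sum.inl n) := by
    intro n
    have h : ∃ m, ι m = ι n := ⟨n, rfl⟩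
    simp only [r, hx, hy, if_false, dif_pos h]
    rw [hι h.choose_spec]
  have rinj : Function.Injective r := by
    intro u v huv
    by_cases hu : u = x
    · subst hu
      by_contra hne
      rw [rx] at huv
      simp only [r, Ne.symm hne, if_false] at huv
      split_ifs at huv <;> simp at huv
    by_cases hv : v = x
    · subst hv
      rw [rx] at huv
      simp only [r, hu, if_false] at huv
      split_ifs at huv <;> simp at huv
    by_cases hu' : u = y
    · subst hu'
      by_contra hne
      rw [ry] at huv
      simp only [r, Ne.symm hne, hv, if_false] at huv
      split_ifs at huv
    by_cases hv' : v = y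
    · subst hv'
      rw [ry] at huv
      simp only [r, hu, hu', if_false] at huv
      split_ifs at huv
    simp only [r, hu, hu', hv, hv', if_false] at huv
    split_ifs at huv with h1 h2 h2
    · rw [← h1.choose_spec, ← h2.choose_spec]
      simp only [Sum.inr.injEq, Sum.inl.injEq] at huv
      rw [huv]
    · simp at huv
    · simp at huv
    · simp only [Sum.inr.injEq] at huv
      exact hq huv
  let f : V ↪ Bool ⊕ N ⊕ ℕ := ⟨r, rinj⟩
  have hmap : ∀ n, (s n).map f = starEdge ℕ n := by
    intro n
    ext v
    rw [mem_starEdge, Finset.mem_map]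
    constructor
    · rintro ⟨u, hu, rfl⟩
      rcases (hs n u).1 hu with rfl | rfl | rfl
      · exact Or.inl rx
      · exact Or.inr (Or.inl ry)
      · exact Or.inr (Or.inr (rι n))
    · rintro (rfl | rfl | rfl)
      · exact ⟨x, (hs n x).2 (by simp), rx⟩
      · exact ⟨y, (hs n y).2 (by simp), ry⟩
      · exact ⟨ι n, (hs n _).2 (by simp), rι n⟩
  refine ⟨Finset.map f '' E, hfin.image _, ?_, fun n => ⟨s n, hsE n, hmap n⟩, ?_⟩
  · rintro _ ⟨g, hg, rfl⟩
    simpa using h3 g hg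
  · ext χ
    constructor
    · rintro ⟨c, hc, hχ⟩
      have hi : Function.Injective (Finset.map f) := Finset.map_injective f
      refine ⟨fun g => if h : ∃ g', Finset.map f g' = g then c h.choose else c ∅, ?_, ?_⟩
      · rw [good_image_iff ht]
        refine hc.congr fun e _ => ?_
        have h : ∃ g', Finset.map f g' = e.map f := ⟨e, rfl⟩
        rw [dif_pos h, hi h.choose_spec]
      · intro n
        have h : ∃ g', Finset.map f g' = starEdge ℕ n := ⟨_, hmap n⟩
        have h' : h.choose = s n := hi (h.choose_spec.trans (hmap n).symm)
        simp only [dif_pos h, h', hχ]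
    · rintro ⟨c, hc, hχ⟩
      rw [good_image_iff ht] at hc
      exact ⟨_, hc, fun n => by rw [← hχ, hmap]⟩

lemma Realizable.restrict {k t : ℕ} (ht : 4 ≤ t) {W N : Type} [Countable W] {F : Set (W → Fin k)}
    (h : Realizable k t W F) (ι : N → W) (hι : Function.Injective ι) :
    Realizable k t N ((fun χ => χ ∘ ι) '' F) := by
  obtain ⟨E, hfin, h3, hst, rfl⟩ := h
  convert realizable_of_star (k := k) ht E hfin h3 (x := Sum.inl false) (y := Sum.inl true)
    (by simp) (fun n => Sum.inr (Sum.inl (ι n))) (fun a b hab => hι (by simpa using hab))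
    (by simp) (by simp) (fun n => starEdge ℕ (ι n)) (fun n v => mem_starEdge) (fun n => hst _) using 1
  ext χ
  constructor
  · rintro ⟨_, ⟨c, hc, hχ⟩, rfl⟩
    exact ⟨c, hc, fun n => hχ _⟩
  · rintro ⟨c, hc, hχ⟩
    exact ⟨fun w => c (starEdge ℕ w), ⟨c, hc, fun _ => rfl⟩, funext hχ⟩

/-! ### Amalgamation along linear systems -/

/-- A family of embeddings `N → W` whose images pairwise share at most one point. -/
def IsLinear {I N W : Type} (φ : I → N → W) : Prop :=
  (∀ l, Function.Injective (φ l)) ∧ ∀ l l' n₁ n₂ m₁ m₂, n₁ ≠ n₂ → φ l n₁ = φ l' m₁ →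
    φ l n₂ = φ l' m₂ → l = l'

/-- The embedding of the `l`-th copy of the gadget: the centre pair is common to all copies, the
leaves are attached by `φ l`, and the other vertices are private. -/
def copyMap {I N W M : Type} {φ : I → N → W} (hφ : IsLinear φ) (l : I) :
    Bool ⊕ N ⊕ M ↪ Bool ⊕ W ⊕ (I × M) where
  toFun := Sum.map id (Sum.map (φ l) (fun m => (l, m)))
  inj' := Sum.map_injective.2 ⟨Function.injective_id, Sum.map_injective.2
    ⟨hφ.1 l, fun a b h => by simpa using h⟩⟩

section Amalgam

variable {I N W M : Type} {φ : I → N → W} (hφ : IsLinear φ)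

lemma map_starEdge (l : I) (n : N) : (starEdge M n).map (copyMap hφ l) = starEdge (I × M) (φ l n) := by
  ext v
  rw [Finset.mem_map, mem_starEdge]
  constructor
  · rintro ⟨u, hu, rfl⟩
    rcases mem_starEdge.1 hu with rfl | rfl | rfl <;> simp [copyMap]
  · rintro (rfl | rfl | rfl)
    · exact ⟨Sum.inl false, by simp [mem_starEdge], rfl⟩
    · exact ⟨Sum.inl true, by simp [mem_starEdge], rfl⟩
    · exact ⟨Sum.inr (Sum.inl n), by simp [mem_starEdge], rfl⟩

/-- By linearity, a triple lying in two different copies is an edge of the star. -/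
lemma eq_star_of_two_copies {l l' : I} (hl : l' ≠ l) {g : Finset (Bool ⊕ N ⊕ M)}
    (h3 : g.card = 3) (hg : ∀ v ∈ g, ∃ u : Bool ⊕ N ⊕ M, copyMap hφ l u = copyMap hφ l' v) :
    ∃ n, g = starEdge M n := by
  classical
  have hM : ∀ m, Sum.inr (Sum.inr m) ∉ g := by
    intro m hm
    obtain ⟨u, hu⟩ := hg _ hm
    rcases u with u | u | u <;> simp [copyMap] at hu
    exact hl hu.1.symm
  have hN : ∀ n, Sum.inr (Sum.inl n) ∈ g → ∃ n', φ l' n = φ l n' := by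
    intro n hn
    obtain ⟨u, hu⟩ := hg _ hn
    rcases u with u | u | u <;> simp [copyMap] at hu
    exact ⟨u, hu.symm⟩
  have huniq : ∀ n m, Sum.inr (Sum.inl n) ∈ g → Sum.inr (Sum.inl m) ∈ g → n = m := by
    intro n m hn hm
    by_contra hne
    obtain ⟨n', hn'⟩ := hN n hn
    obtain ⟨m', hm'⟩ := hN m hm
    exact hl (hφ.2 _ _ n m n' m' hne hn' hm')
  obtain ⟨n, hn⟩ : ∃ n, Sum.inr (Sum.inl n) ∈ g := by
    by_contra! hno
    have : g ⊆ {Sum.inl false, Sum.inl true} := by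
      intro v hv
      rcases v with (_ | _) | v | v
      · simp
      · simp
      · exact absurd hv (hno v)
      · exact absurd hv (hM v)
    have := (Finset.card_le_card this).trans Finset.card_le_two
    omega
  refine ⟨n, Finset.eq_of_subset_of_card_le ?_ (by rw [card_starEdge, h3])⟩
  intro v hv
  rw [mem_starEdge]
  rcases v with (_ | _) | v | v
  · simp
  · simp
  · simp [huniq v n hv hn]
  · exact absurd hv (hM v)

/-- The amalgam of one copy of `E` for each member of the system, together with the full star
on the leaf set `W`. -/
def amalgam (E : Set (Finset (Bool ⊕ N ⊕ M))) : Set (Finset (Bool ⊕ W ⊕ (I × M))) :=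
  Set.range (starEdge (I × M)) ∪ ⋃ l, Finset.map (copyMap hφ l) '' E

/-- Each copy is an induced subhypergraph of the amalgam. -/
lemma amalgam_induced {E : Set (Finset (Bool ⊕ N ⊕ M))} (h3 : ∀ g ∈ E, g.card = 3)
    (hst : ∀ n, starEdge M n ∈ E) {g : Finset (Bool ⊕ W ⊕ (I × M))} (hg : g ∈ amalgam hφ E) (l : I)
    (hl : ∀ v ∈ g, ∃ u : Bool ⊕ N ⊕ M, copyMap hφ l u = v) :
    g ∈ Finset.map (copyMap hφ l) '' E := by
  have hstar : ∀ w, g = starEdge (I × M) w → g ∈ Finset.map (copyMap hφ l) '' E := by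
    rintro w rfl
    obtain ⟨u, hu⟩ := hl (Sum.inr (Sum.inl w)) (by simp [mem_starEdge])
    rcases u with u | n | u <;> simp [copyMap] at hu
    exact ⟨starEdge M n, hst n, by rw [map_starEdge, hu]⟩
  rcases hg with ⟨w, rfl⟩ | hg
  · exact hstar w rfl
  · obtain ⟨l', g', hg', rfl⟩ := Set.mem_iUnion.1 hg
    by_cases hll : l' = l
    · subst hll
      exact ⟨g', hg', rfl⟩
    · obtain ⟨n, rfl⟩ := eq_star_of_two_copies hφ hll (h3 g' hg') fun v hv =>
        hl _ (Finset.mem_map_of_mem _ hv)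
      exact hstar _ (map_starEdge hφ l' n)

/-- Every clique of the amalgam lies in a single copy, so good colorings of the amalgam are the
colorings that are good on every copy. -/
lemma good_amalgam_iff {k t : ℕ} (ht : 4 ≤ t) {E : Set (Finset (Bool ⊕ N ⊕ M))}
    (h3 : ∀ g ∈ E, g.card = 3) (hst : ∀ n, starEdge M n ∈ E)
    (c : Finset (Bool ⊕ W ⊕ (I × M)) → Fin k) :
    Good k t (amalgam hφ E) c ↔ ∀ l, Good k t E (fun g => c (g.map (copyMap hφ l))) := by
  classical
  constructor
  · intro h l
    rw [← good_image_iff ht]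
    rintro ⟨S, hS, x, hx⟩
    exact h ⟨S, hS, x, fun e he he3 => ⟨Or.inr (Set.mem_iUnion.2 ⟨l, (hx e he he3).1⟩),
      (hx e he he3).2⟩⟩
  · rintro h ⟨S, hS, x, hx⟩
    obtain ⟨l, hl⟩ : ∃ l, ∀ v ∈ S, ∃ u : Bool ⊕ N ⊕ M, copyMap hφ l u = v := by
      by_cases hM : ∃ p, Sum.inr (Sum.inr p) ∈ S
      · -- a private vertex belongs to a single copy and is joined to all of `S`
        obtain ⟨⟨l, m⟩, hp⟩ := hM
        refine ⟨l, fun v hv => ?_⟩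
        obtain ⟨e, h1, h2, he3⟩ := Finset.exists_subsuperset_card_eq
          (s := {Sum.inr (Sum.inr (l, m)), v}) (t := S) (n := 3)
          (by intro u; simp; rintro (rfl | rfl) <;> assumption)
          (Finset.card_le_two.trans (by omega)) (by omega)
        have hpe : Sum.inr (Sum.inr (l, m)) ∈ e := h1 (by simp)
        have hve : v ∈ e := h1 (by simp)
        rcases (hx e h2 he3).1 with ⟨w, rfl⟩ | he
        · simp [mem_starEdge] at hpe
        · obtain ⟨l', g, hg, rfl⟩ := Set.mem_iUnion.1 he
          obtain ⟨u, hu, hu'⟩ := Finset.mem_map.1 hpe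
          obtain ⟨u', -, hu''⟩ := Finset.mem_map.1 hve
          rcases u with u | u | u <;> simp [copyMap] at hu'
          obtain ⟨rfl, -⟩ := hu'
          exact ⟨u', hu''⟩
      · push Not at hM
        -- otherwise `S` has two leaves, and two leaves lie together in at most one copy
        obtain ⟨w, w', hne, hw, hw'⟩ : ∃ w w' : W, w ≠ w' ∧ Sum.inr (Sum.inl w) ∈ S ∧
            Sum.inr (Sum.inl w') ∈ S := by
          have hcard : 1 < (S \ {Sum.inl false, Sum.inl true}).card := by
            have h1 := Finset.le_card_sdiff {Sum.inl false, Sum.inl true} S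
            have h2 : ({Sum.inl false, Sum.inl true} : Finset (Bool ⊕ W ⊕ (I × M))).card ≤ 2 :=
              Finset.card_le_two
            omega
          obtain ⟨a, ha, b, hb, hab⟩ := Finset.one_lt_card.1 hcard
          have aux : ∀ a ∈ S \ {Sum.inl false, Sum.inl true}, ∃ w : W, a = Sum.inr (Sum.inl w) := by
            intro a ha
            rcases a with (_ | _) | a | a
            · simp at ha
            · simp at ha
            · exact ⟨a, rfl⟩
            · exact absurd (Finset.mem_sdiff.1 ha).1 (hM a)
          obtain ⟨w, rfl⟩ := aux a ha
          obtain ⟨w', rfl⟩ := aux b hb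
          exact ⟨w, w', by rintro rfl; exact hab rfl, (Finset.mem_sdiff.1 ha).1,
            (Finset.mem_sdiff.1 hb).1⟩
        have key : ∀ v ∈ S, ∃ l, (∃ n, φ l n = w) ∧ (∃ n, φ l n = w') ∧
            ∃ u : Bool ⊕ N ⊕ M, copyMap hφ l u = v := by
          intro v hv
          obtain ⟨e, h1, h2, he3⟩ := Finset.exists_subsuperset_card_eq
            (s := {Sum.inr (Sum.inl w), Sum.inr (Sum.inl w'), v}) (t := S) (n := 3)
            (by intro u; simp; rintro (rfl | rfl | rfl) <;> assumption)
            Finset.card_le_three (by omega)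
          have hwe : Sum.inr (Sum.inl w) ∈ e := h1 (by simp)
          have hwe' : Sum.inr (Sum.inl w') ∈ e := h1 (by simp)
          have hve : v ∈ e := h1 (by simp)
          rcases (hx e h2 he3).1 with ⟨w'', rfl⟩ | he
          · simp [mem_starEdge] at hwe hwe'
            exact absurd (hwe.trans hwe'.symm) hne
          · obtain ⟨l', g, hg, rfl⟩ := Set.mem_iUnion.1 he
            obtain ⟨u₁, -, hu₁⟩ := Finset.mem_map.1 hwe
            obtain ⟨u₂, -, hu₂⟩ := Finset.mem_map.1 hwe'
            obtain ⟨u₃, -, hu₃⟩ := Finset.mem_map.1 hve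
            rcases u₁ with u₁ | u₁ | u₁ <;> simp [copyMap] at hu₁
            rcases u₂ with u₂ | u₂ | u₂ <;> simp [copyMap] at hu₂
            exact ⟨l', ⟨u₁, hu₁⟩, ⟨u₂, hu₂⟩, u₃, hu₃⟩
        obtain ⟨l, ⟨n, hn⟩, ⟨n', hn'⟩, -⟩ := key _ hw
        refine ⟨l, fun v hv => ?_⟩
        obtain ⟨l', ⟨m, hm⟩, ⟨m', hm'⟩, hu⟩ := key v hv
        have : l = l' := hφ.2 l l' n n' m m' (by rintro rfl; exact hne (hn.symm.trans hn'))
          (hn.trans hm.symm) (hn'.trans hm'.symm)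
        rwa [this]
    have hgl := h l
    rw [← good_image_iff ht] at hgl
    exact hgl ⟨S, hS, x, fun e he he3 => ⟨amalgam_induced hφ h3 hst (hx e he he3).1 l
      fun v hv => hl v (he hv), (hx e he he3).2⟩⟩

end Amalgam

/-- Realizable relations are closed under imposing them along a linear system of embeddings. -/
lemma Realizable.amalgam {k t : ℕ} (hk : 0 < k) (ht : 4 ≤ t) {I N W : Type} [Finite I] [Finite W]
    {F : Set (N → Fin k)} (h : Realizable k t N F) {φ : I → N → W} (hφ : IsLinear φ) :
    Realizable k t W {χ | ∀ l, (fun n => χ (φ l n)) ∈ F} := by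
  classical
  obtain ⟨E, hfin, h3, hst, rfl⟩ := h
  convert realizable_of_star (k := k) ht (_root_.amalgam hφ E) ?_ ?_
    (x := Sum.inl false) (y := Sum.inl true)
    (by simp) (fun w => Sum.inr (Sum.inl w)) (fun a b hab => by simpa using hab)
    (by simp) (by simp) (fun w => starEdge (I × ℕ) w) (fun n v => mem_starEdge)
    (fun n => Or.inl ⟨n, rfl⟩) using 1
  · ext χ
    constructor
    · intro hχ
      choose c hc hcχ using hχ
      -- star edges are colored by `χ`, the other edges of the `l`-th copy by `c l`
      let d : Finset (Bool ⊕ W ⊕ (I × ℕ)) → Fin k := fun g =>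
        if h : ∃ w, starEdge _ w = g then χ h.choose
        else if h : ∃ p : I × Finset (Bool ⊕ N ⊕ ℕ), p.2 ∈ E ∧ p.2.map (copyMap hφ p.1) = g then
          c h.choose.1 h.choose.2
        else ⟨0, hk⟩
      have hd : ∀ w, d (starEdge _ w) = χ w := by
        intro w
        have h : ∃ w', starEdge (I × ℕ) w' = starEdge _ w := ⟨w, rfl⟩
        simp only [d, dif_pos h, starEdge_injective h.choose_spec]
      refine ⟨d, ?_, hd⟩
      rw [good_amalgam_iff hφ ht h3 hst]
      intro l
      refine (hc l).congr fun e he => ?_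
      by_cases h1 : ∃ n, e = starEdge ℕ n
      · obtain ⟨n, rfl⟩ := h1
        rw [map_starEdge, hd, hcχ]
      · have h2 : ¬ ∃ w, starEdge (I × ℕ) w = e.map (copyMap hφ l) := by
          rintro ⟨w, hw⟩
          obtain ⟨u, hu, hu'⟩ := Finset.mem_map.1
            (show Sum.inr (Sum.inl w) ∈ e.map (copyMap hφ l) by rw [← hw]; simp [mem_starEdge])
          rcases u with u | n | u <;> simp [copyMap] at hu'
          refine h1 ⟨n, ?_⟩
          rw [← hu', ← map_starEdge hφ, Finset.map_inj] at hw
          exact hw.symm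
        have h4 : ∃ p : I × Finset (Bool ⊕ N ⊕ ℕ), p.2 ∈ E ∧
            p.2.map (copyMap hφ p.1) = e.map (copyMap hφ l) := ⟨(l, e), he, rfl⟩
        simp only [d, dif_neg h2, dif_pos h4]
        obtain ⟨hE, heq⟩ := h4.choose_spec
        have hl : h4.choose.1 = l := by
          by_contra hne
          refine h1 (eq_star_of_two_copies hφ (Ne.symm hne) (h3 e he) fun v hv => ?_)
          have := Finset.mem_map_of_mem (copyMap hφ l) hv
          rw [← heq] at this
          obtain ⟨u, -, hu⟩ := Finset.mem_map.1 this
          exact ⟨u, hu⟩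
        have he' : h4.choose.2 = e := by
          rw [hl, Finset.map_inj] at heq
          exact heq
        rw [hl, he']
    · rintro ⟨c, hc, hcχ⟩ l
      exact ⟨_, (good_amalgam_iff hφ ht h3 hst c).1 hc l, fun n => by rw [map_starEdge, hcχ]⟩
  · refine (Set.finite_range _).union (Set.finite_iUnion fun l => hfin.image _)
  · rintro g (⟨w, rfl⟩ | hg)
    · exact card_starEdge w
    · obtain ⟨l, g', hg', rfl⟩ := Set.mem_iUnion.1 hg
      simpa using h3 g' hg'

/-! ### The negative sender -/

/-- Some realizable relation is nonempty and consists of surjective patterns only. -/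
lemma exists_surjective_relation (k t : ℕ) (hk : 2 ≤ k) (ht : 4 ≤ t) :
    ∃ (N : Type) (_ : Finite N) (F : Set (N → Fin k)), Realizable k t N F ∧ F.Nonempty ∧
      ∀ χ ∈ F, Function.Surjective χ := by
  obtain ⟨E, x, y, hxy, h3, ⟨c₀, hc₀⟩, hE⟩ := exists_critical k t hk ht
  have hfin : Finite {w : ℕ // w ≠ x ∧ w ≠ y ∧ {x, y, w} ∈ E} := by
    refine Set.Finite.subset (E.biUnion id).finite_toSet ?_
    rintro w ⟨-, -, hw⟩
    rw [Finset.mem_coe, Finset.mem_biUnion]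
    exact ⟨_, hw, by simp⟩
  refine ⟨{w : ℕ // w ≠ x ∧ w ≠ y ∧ {x, y, w} ∈ E}, hfin, _,
    realizable_of_star (k := k) ht (E : Set (Finset ℕ)) E.finite_toSet h3 hxy Subtype.val
      Subtype.val_injective (fun n => n.2.1) (fun n => n.2.2.1) (fun n => {x, y, n.1})
      (fun n v => by simp) (fun n => n.2.2.2), ⟨_, c₀, hc₀, fun _ => rfl⟩, ?_⟩
  rintro χ ⟨c, hc, hχ⟩ i
  obtain ⟨w, h1, h2, h4, h5⟩ := hE c hc i
  exact ⟨⟨w, h1, h2, h4⟩, by rw [← hχ]; exact h5⟩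

/-- Distinct combinatorial lines share at most one point. -/
lemma isLinear_lines (α ι : Type) :
    IsLinear (fun (l : Combinatorics.Line α ι) (a : α) => (l a : ι → α)) := by
  constructor
  · intro l a b hab
    obtain ⟨i, hi⟩ := l.proper
    simpa [hi] using congrFun hab i
  · intro l l' n₁ n₂ m₁ m₂ hne h1 h2
    have h1' := fun i => congrFun h1 i
    have h2' := fun i => congrFun h2 i
    simp only [Combinatorics.Line.coe_apply] at h1' h2'
    obtain ⟨i, hi⟩ := l.proper
    have hi1 := h1' i
    have hi2 := h2' i
    rw [hi] at hi1 hi2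
    rcases hi' : l'.idxFun i with _ | b
    · rw [hi'] at hi1 hi2
      simp only [Option.getD_none] at hi1 hi2
      subst hi1 hi2
      refine Combinatorics.Line.ext (funext fun j => ?_)
      have a1 := h1' j
      have a2 := h2' j
      rcases hj : l.idxFun j with _ | b <;> rcases hj' : l'.idxFun j with _ | b' <;>
        rw [hj, hj'] at a1 a2 <;> simp only [Option.getD_none, Option.getD_some] at a1 a2
      · exact absurd (a1.trans a2.symm) hne
      · exact absurd (a1.symm.trans a2) hne
      · rw [a1]
    · rw [hi'] at hi1 hi2
      simp only [Option.getD_none, Option.getD_some] at hi1 hi2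
      exact absurd (hi1.trans hi2.symm) hne

/-- If `F` is nonempty and all its patterns use every color, then some linear system admits valid colorings
and has two points that get different colors in all of them. -/
lemma exists_separating_system {k : ℕ} (hk : 2 ≤ k) {N : Type} [Finite N] {F : Set (N → Fin k)}
    (hF : F.Nonempty) (hs : ∀ χ ∈ F, Function.Surjective χ) :
    ∃ (I W : Type) (_ : Finite I) (_ : Finite W) (φ : I → N → W) (w w' : W), IsLinear φ ∧ w ≠ w' ∧
      (∃ χ : W → Fin k, ∀ l, (fun n => χ (φ l n)) ∈ F) ∧
      ∀ χ : W → Fin k, (∀ l, (fun n => χ (φ l n)) ∈ F) → χ w ≠ χ w' := by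
  classical
  obtain ⟨ι, _, hHJ⟩ := Combinatorics.Line.exists_mono_in_high_dimension N (Fin k)
  have hfinL : Finite (Combinatorics.Line N ι) :=
    Finite.of_injective (fun l => l.idxFun) fun l l' h => Combinatorics.Line.ext h
  have hlin := isLinear_lines N ι
  -- by Hales–Jewett the set of all lines is not colorable, so the last addition of a line fails for
  -- some colorable set `J` and some line `l₀`
  obtain ⟨J, l₀, ⟨χJ, hχJ⟩, hJ⟩ : ∃ (J : Finset (Combinatorics.Line N ι))
      (l₀ : Combinatorics.Line N ι),
      (∃ χ : (ι → N) → Fin k, ∀ l ∈ J, (fun n => χ (l n)) ∈ F) ∧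
      ¬ ∃ χ : (ι → N) → Fin k, ∀ l ∈ insert l₀ J, (fun n => χ (l n)) ∈ F := by
    by_contra! hcon
    have hall : ∀ J : Finset (Combinatorics.Line N ι),
        ∃ χ : (ι → N) → Fin k, ∀ l ∈ J, (fun n => χ (l n)) ∈ F := by
      intro J
      induction J using Finset.induction_on with
      | empty => exact ⟨fun _ => ⟨0, by omega⟩, by simp⟩
      | insert l J _ ih =>
        obtain ⟨χ, hχ⟩ := ih
        exact hcon J l ⟨χ, hχ⟩
    have := Fintype.ofFinite (Combinatorics.Line N ι)
    obtain ⟨χ, hχ⟩ := hall Finset.univ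
    obtain ⟨l, x, hl⟩ := hHJ χ
    have hsur := hs _ (hχ l (Finset.mem_univ l))
    obtain ⟨a, ha⟩ := hsur ⟨0, by omega⟩
    obtain ⟨b, hb⟩ := hsur ⟨1, by omega⟩
    have : (⟨0, by omega⟩ : Fin k) = ⟨1, by omega⟩ := by
      rw [← ha, ← hb]
      exact (hl a).trans (hl b).symm
    simp at this
  have hl₀ : l₀ ∉ J := by
    intro h
    rw [Finset.insert_eq_of_mem h] at hJ
    exact hJ ⟨χJ, hχJ⟩
  -- attach the points of `l₀` in `A` to their place and leave the others as new points
  let ψ : Finset N → Option J → N → (ι → N) ⊕ N := fun A o n =>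
    match o with
    | some l => Sum.inl (l.1 n)
    | none => if n ∈ A then Sum.inl (l₀ n) else Sum.inr n
  have hψs : ∀ A (l : J) n, ψ A (some l) n = Sum.inl (l.1 n) := fun _ _ _ => rfl
  have hψn : ∀ A n, ψ A none n = if n ∈ A then Sum.inl (l₀ n) else Sum.inr n := fun _ _ => rfl
  have hψn' : ∀ A n v, ψ A none n = Sum.inl v → l₀ n = v := by
    intro A n v h
    rw [hψn] at h
    split_ifs at h
    simpa using h
  have hψlin : ∀ A, IsLinear (ψ A) := by
    intro A
    refine ⟨?_, ?_⟩
    · rintro (_ | l) a b hab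
      · rw [hψn, hψn] at hab
        split_ifs at hab
        · exact hlin.1 l₀ (by simpa using hab)
        · simpa using hab
      · exact hlin.1 l.1 (by simpa [hψs] using hab)
    · rintro (_ | l) (_ | l') n₁ n₂ m₁ m₂ hne h1 h2
      · rfl
      · have := hlin.2 l₀ l'.1 n₁ n₂ m₁ m₂ hne (hψn' A _ _ h1) (hψn' A _ _ h2)
        exact absurd l'.2 (this ▸ hl₀)
      · have hm : m₁ ≠ m₂ := by
          rintro rfl
          rw [← h2] at h1
          exact hne (hlin.1 l.1 (by simpa [hψs] using h1))
        have := hlin.2 l₀ l.1 m₁ m₂ n₁ n₂ hm (hψn' A _ _ h1.symm) (hψn' A _ _ h2.symm)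
        exact absurd l.2 (this ▸ hl₀)
      · have := hlin.2 l.1 l'.1 n₁ n₂ m₁ m₂ hne (by simpa [hψs] using h1)
          (by simpa [hψs] using h2)
        rw [Subtype.ext this]
  let P : Finset N → Prop := fun A =>
    ∃ χ : (ι → N) ⊕ N → Fin k, ∀ o, (fun n => χ (ψ A o n)) ∈ F
  have hP0 : P ∅ := by
    obtain ⟨β, hβ⟩ := hF
    refine ⟨Sum.elim χJ β, ?_⟩
    rintro (_ | l)
    · simpa [hψn] using hβ
    · exact hχJ l.1 l.2
  obtain ⟨A, a, ha, hPA, hPA'⟩ : ∃ A a, a ∉ A ∧ P A ∧ ¬ P (insert a A) := by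
    by_contra! hcon
    have hall : ∀ A, P A := by
      intro A
      induction A using Finset.induction_on with
      | empty => exact hP0
      | insert a A ha ih => exact hcon A a ha ih
    have := Fintype.ofFinite N
    obtain ⟨χ, hχ⟩ := hall Finset.univ
    refine hJ ⟨fun w => χ (Sum.inl w), fun l hl => ?_⟩
    rcases Finset.mem_insert.1 hl with rfl | hl
    · simpa [hψn] using hχ none
    · exact hχ (some ⟨l, hl⟩)
  refine ⟨Option J, (ι → N) ⊕ N, inferInstance, inferInstance, ψ A, Sum.inl (l₀ a), Sum.inr a,
    hψlin A, by simp, hPA, ?_⟩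
  -- a valid coloring agreeing on the two points would survive their identification
  intro χ hχ heq
  refine hPA' ⟨χ, ?_⟩
  rintro (_ | l)
  · convert hχ none using 2 with n
    rw [hψn, hψn]
    by_cases hna : n = a
    · subst hna
      simp [ha, heq]
    · simp [hna]
  · exact hχ (some l)

/-- The negative sender: a star with two leaves on which the realizable relation is that the two
colors differ. -/
lemma realizable_ne (k t : ℕ) (hk : 2 ≤ k) (ht : 4 ≤ t) :
    Realizable k t Bool {χ | χ false ≠ χ true} := by
  obtain ⟨N, _, F, hF, hne, hs⟩ := exists_surjective_relation k t hk ht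
  obtain ⟨I, W, _, _, φ, w, w', hφ, hww, ⟨χ₀, hχ₀⟩, hsep⟩ := exists_separating_system hk hne hs
  have hR := (hF.amalgam (by omega) ht hφ).restrict ht (fun b : Bool => if b then w' else w)
    (by intro a b; cases a <;> cases b <;> simp [hww, hww.symm])
  convert hR using 1
  ext χ
  constructor
  · -- any pattern with two colors is a color permutation of a fixed one
    intro hχ
    have h0 := hsep χ₀ hχ₀
    obtain ⟨σ, hσ, hσ'⟩ : ∃ σ : Equiv.Perm (Fin k), σ (χ₀ w) = χ false ∧ σ (χ₀ w') = χ true := by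
      let σ₁ := Equiv.swap (χ₀ w) (χ false)
      have h1 : σ₁ (χ₀ w) = χ false := Equiv.swap_apply_left _ _
      refine ⟨σ₁.trans (Equiv.swap (σ₁ (χ₀ w')) (χ true)), ?_, ?_⟩
      · rw [Equiv.trans_apply, h1, Equiv.swap_apply_of_ne_of_ne _ hχ]
        rw [← h1]
        exact fun h => h0 (σ₁.injective h)
      · simp
    have := hR.perm σ ⟨χ₀, hχ₀, rfl⟩
    convert this using 1
    funext b
    cases b <;> simp [hσ, hσ']
  · rintro ⟨χ, hχ, rfl⟩
    simpa using hsep χ hχ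

/-- Gluing a negative sender on every pair of leaves makes a star with `k` leaves rainbow. -/
lemma realizable_rainbow (k t : ℕ) (hk : 2 ≤ k) (ht : 4 ≤ t) :
    Realizable k t (Fin k) {χ | Function.Injective χ} := by
  let φ : {p : Fin k × Fin k // p.1 < p.2} → Bool → Fin k := fun p b => if b then p.1.2 else p.1.1
  have hφ : IsLinear φ := by
    constructor
    · rintro ⟨⟨i, j⟩, h⟩ a b
      have := ne_of_lt h
      cases a <;> cases b <;> simp_all [φ, eq_comm]
    · rintro ⟨⟨i, j⟩, h⟩ ⟨⟨i', j'⟩, h'⟩ n₁ n₂ m₁ m₂ hne h1 h2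
      change i < j at h
      change i' < j' at h'
      cases n₁ <;> cases n₂ <;> cases m₁ <;> cases m₂ <;> simp [φ] at * <;> omega
  convert (realizable_ne k t hk ht).amalgam (by omega) ht hφ using 1
  ext χ
  constructor
  · intro h p hp
    exact absurd (h hp) (by simpa [φ] using ne_of_lt p.2)
  · intro h i j hij
    by_contra hne
    rcases lt_or_gt_of_ne hne with hlt | hlt
    · exact h ⟨(i, j), hlt⟩ (by simpa [φ] using hij)
    · exact h ⟨(j, i), hlt⟩ (by simpa [φ] using hij.symm)

/-- Rainbow star BEL-gadget: there is a 3-uniform hypergraph with a 2-set `S` and `k`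
edges pairwise intersecting exactly in `S`, admitting a `K_t^{(3)}`-free `k`-coloring,
such that every `K_t^{(3)}`-free `k`-coloring gives these `k` edges pairwise distinct
colors (hence all `k` colors appear on them). -/
theorem stmt_5 (t k : ℕ) (ht : 4 ≤ t) (hk : 2 ≤ k) :
    ∃ (E : Finset (Finset ℕ)) (S : Finset ℕ) (es : Fin k → Finset ℕ),
      (∀ g ∈ E, g.card = 3) ∧ S.card = 2 ∧ (∀ i, es i ∈ E) ∧
      (∀ i j, i ≠ j → es i ∩ es j = S) ∧
      (∃ c : Finset ℕ → Fin k, NoMonoK3 k t E c) ∧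
      (∀ c : Finset ℕ → Fin k, NoMonoK3 k t E c →
        Function.Injective fun i => c (es i)) := by
  classical
  obtain ⟨E, hfin, h3, hst, hF⟩ := realizable_rainbow k t hk ht
  obtain ⟨q, hq⟩ := exists_injective_nat (Bool ⊕ Fin k ⊕ ℕ)
  let f : (Bool ⊕ Fin k ⊕ ℕ) ↪ ℕ := ⟨q, hq⟩
  have hgood : ∀ c : Finset ℕ → Fin k, NoMonoK3 k t (hfin.image (Finset.map f)).toFinset c ↔
      Good k t E (fun e => c (e.map f)) := by
    intro c
    rw [← good_image_iff ht]
    simp only [NoMonoK3, Good, Set.Finite.mem_toFinset]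
  refine ⟨(hfin.image (Finset.map f)).toFinset,
    ({Sum.inl false, Sum.inl true} : Finset (Bool ⊕ Fin k ⊕ ℕ)).map f,
    fun i => (starEdge ℕ i).map f, ?_, by simp, ?_, ?_, ?_, ?_⟩
  · intro g hg
    rw [Set.Finite.mem_toFinset] at hg
    obtain ⟨g', hg', rfl⟩ := hg
    simpa using h3 g' hg'
  · intro i
    rw [Set.Finite.mem_toFinset]
    exact ⟨_, hst i, rfl⟩
  · intro i j hij
    rw [← Finset.map_inter]
    congr 1
    ext v
    rw [Finset.mem_inter, mem_starEdge, mem_starEdge]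
    rcases v with (_ | _) | v | v
    · simp
    · simp
    · simp
      rintro rfl
      exact hij
    · simp
  · have : (id : Fin k → Fin k) ∈ {χ : Fin k → Fin k | Function.Injective χ} :=
      Function.injective_id
    rw [hF] at this
    obtain ⟨c, hc, -⟩ := this
    refine ⟨fun g => c (g.preimage f f.injective.injOn), (hgood _).2 ?_⟩
    simpa using hc
  · intro c hc
    have : (fun i => c ((starEdge ℕ i).map f)) ∈ {χ : Fin k → Fin k | Function.Injective χ} := by
      rw [hF]
      exact ⟨_, (hgood c).1 hc, fun _ => rfl⟩
    exact this
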